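/- Let W carry a degree assignment (d_c)_{c∈C} and a combinatorial quasi-fiber structure (g, (m_c), B) of rank r. Assume: (a) p ∤ m_c for every c ∈ C; (b) M_s(δ) = 0 in k for every P ∈ B, every δ ∈ Δ_P and every s ≠ g(φ_P(δ)); (c) Σ_{c∈g^{-1}(s)} d_c·m_c ≡ 0 (mod p) for every s ∈ {1,…,r}; (d) for each s, the restricted combinatorics W°_s is completely p-reductive with respect to ω_𝟙|_s, where 𝟙 = (1,…,1) ∈ k^r. Then ker(·∧ω_𝟙 : A¹ → A²_{W,k}) = R_φ, where ω_𝟙 = Σ_{c∈C} m_c·σ_c; in particular dim_k H¹(A*_{W,k}, ·∧ω_𝟙) = r − 1. (Combinatorial form of the 'moreover' part of Theorem 'p.index', the case of index p.) -/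

import Mathlib

/-!
The local quotient `Λ² A_P / I_P` is detected by contraction with the sum of coordinates, so the
component of `η ∧ ω` at `P` vanishes iff every branch `δ` at `P` satisfies the linear equation
`η_δ · Σ μ(δ,δ') ω_δ' = ω_δ · Σ μ(δ,δ') η_δ'` (`wedge_fst_eq_zero_iff`).

Let `ω = ω_𝟙`. If `η = ω_b`, these equations hold at base points because only `M_{g(δ)}(δ)`
contributes to the sums, and at the other points because `η` is locally proportional to `ω`
(`omega_branchRes`); the component at infinity vanishes since each quasi-fiber has total degree
`0` in `k` (`sum_degree_omega`).

Conversely, if `η ∧ ω = 0`, then inside each quasi-fiber every reduction step forces the ratios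
`η / ω` of the two merged classes to agree (`ratio_const`), so complete reductivity makes `η / ω`
constant on each quasi-fiber, that is `η = ω_b`. The dimension count follows from injectivity of
`b ↦ ω_b`.
-/

open scoped Classical

/-- The weak combinatorial type of a plane projective curve. -/
structure WeakComb (p : ℕ) where
  /-- the set of irreducible components -/
  C : Type
  [fintypeC : Fintype C]
  [decEqC : DecidableEq C]
  [nonemptyC : Nonempty C]
  /-- the set of singular points -/
  S : Type
  [fintypeS : Fintype S]
  [decEqS : DecidableEq S]
  /-- the local branches at each singular point -/
  Δ : S → Type
  [fintypeΔ : ∀ P, Fintype (Δ P)]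
  [decEqΔ : ∀ P, DecidableEq (Δ P)]
  /-- each branch belongs to a component -/
  φ : ∀ P, Δ P → C
  /-- local intersection multiplicities of pairs of branches -/
  μ : ∀ P, Δ P → Δ P → ℕ
  μ_symm : ∀ P δ δ', φ P δ ≠ φ P δ' → μ P δ δ' = μ P δ' δ
  μ_pos : ∀ P δ δ', φ P δ ≠ φ P δ' → 0 < μ P δ δ'

attribute [instance] WeakComb.fintypeC WeakComb.decEqC WeakComb.nonemptyC
attribute [instance] WeakComb.fintypeS WeakComb.decEqS WeakComb.fintypeΔ WeakComb.decEqΔ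

namespace WeakComb

variable {p : ℕ} (W : WeakComb p)

/-- μ_P(δ,δ') with the convention that it vanishes on pairs of branches of the same component. -/
def muk (P : W.S) (δ δ' : W.Δ P) : ℕ :=
  if W.φ P δ = W.φ P δ' then 0 else W.μ P δ δ'

/-- μ_P(δ, j): the multiplicity of intersection of the branch δ with the component j. -/
def muC (P : W.S) (δ : W.Δ P) (j : W.C) : ℕ :=
  ∑ δ' : W.Δ P, if W.φ P δ' = j then W.muk P δ δ' else 0

/-- A degree assignment: positive degrees satisfying the Bezout condition. -/
def IsDegree (d : W.C → ℕ) : Prop :=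
  (∀ i, 0 < d i) ∧
  ∀ i j, i ≠ j →
    d i * d j = ∑ P : W.S, ∑ δ : W.Δ P, if W.φ P δ = i then W.muC P δ j else 0

/-- The basis vector σ_i of A¹ = (C → ZMod p). -/
noncomputable def sigma (i : W.C) : W.C → ZMod p := Pi.single i 1

/-- The basis vector ψ_P^δ of A_P = (Δ_P → ZMod p). -/
noncomputable def psi (P : W.S) (δ : W.Δ P) : W.Δ P → ZMod p := Pi.single δ 1

/-- ψ_P^δ ∧ ψ_P^δ' as an element of Λ² A_P. -/
noncomputable def psiW (P : W.S) (δ δ' : W.Δ P) : ⋀[ZMod p]^2 (W.Δ P → ZMod p) :=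
  ⟨ExteriorAlgebra.ιMulti (ZMod p) 2 ![W.psi P δ, W.psi P δ'],
   ExteriorAlgebra.ιMulti_range (ZMod p) 2 (Set.mem_range_self _)⟩

/-- The subspace I_P of Λ² A_P. -/
noncomputable def IP (P : W.S) : Submodule (ZMod p) (⋀[ZMod p]^2 (W.Δ P → ZMod p)) :=
  Submodule.span (ZMod p)
    ({x | ∃ δ1 δ2 δ3 : W.Δ P, x = W.psiW P δ1 δ2 + W.psiW P δ2 δ3 + W.psiW P δ3 δ1} ∪
     {x | (∀ δ δ' : W.Δ P, W.φ P δ = W.φ P δ') ∧ ∃ δ1 δ2 : W.Δ P, x = W.psiW P δ1 δ2})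

/-- The degree-two part A² = A^{2,0} ⊕ A^{2,∞} of the Combinatorial Aomoto algebra. -/
abbrev A2 (d : W.C → ℕ) : Type :=
  ((P : W.S) → (⋀[ZMod p]^2 (W.Δ P → ZMod p)) ⧸ W.IP P) ×
  ({i : W.C // p ∣ d i} → ZMod p)

/-- The wedge product A¹ × A¹ → A², extending σ_i ∧ σ_j bilinearly. -/
noncomputable def wedge (d : W.C → ℕ) (α β : W.C → ZMod p) : W.A2 d :=
  (fun P => ∑ δ : W.Δ P, ∑ δ' : W.Δ P,
      (α (W.φ P δ) * β (W.φ P δ') * (W.muk P δ δ' : ZMod p)) •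
        Submodule.Quotient.mk (W.psiW P δ δ'),
   fun i => α i.1 * (∑ j : W.C, (d j : ZMod p) * β j)
          - β i.1 * (∑ j : W.C, (d j : ZMod p) * α j))

/-- The linear map ·∧α : A¹ → A², β ↦ β ∧ α. -/
noncomputable def wedgeL (d : W.C → ℕ) (α : W.C → ZMod p) :
    (W.C → ZMod p) →ₗ[ZMod p] W.A2 d where
  toFun β := W.wedge d β α
  map_add' β γ := by
    refine Prod.ext ?_ ?_
    · funext P
      simp only [wedge, Pi.add_apply, Prod.fst_add]
      rw [← Finset.sum_add_distrib]
      refine Finset.sum_congr rfl fun δ _ => ?_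
      rw [← Finset.sum_add_distrib]
      refine Finset.sum_congr rfl fun δ' _ => ?_
      rw [← add_smul, add_mul, add_mul]
    · funext i
      simp only [wedge, Pi.add_apply, Prod.snd_add]
      rw [show (∑ x : W.C, (d x : ZMod p) * (β x + γ x))
            = (∑ x : W.C, (d x : ZMod p) * β x) + ∑ x : W.C, (d x : ZMod p) * γ x by
        rw [← Finset.sum_add_distrib]; exact Finset.sum_congr rfl fun x _ => by ring]
      ring
  map_smul' c β := by
    refine Prod.ext ?_ ?_
    · funext P
      simp only [wedge, Pi.smul_apply, smul_eq_mul, RingHom.id_apply, Prod.smul_fst]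
      rw [Finset.smul_sum]
      refine Finset.sum_congr rfl fun δ _ => ?_
      rw [Finset.smul_sum]
      refine Finset.sum_congr rfl fun δ' _ => ?_
      rw [smul_smul]
      ring_nf
    · funext i
      simp only [wedge, Pi.smul_apply, smul_eq_mul, RingHom.id_apply, Prod.smul_snd]
      rw [show (∑ x : W.C, (d x : ZMod p) * (c * β x)) = c * ∑ x : W.C, (d x : ZMod p) * β x by
        rw [Finset.mul_sum]; exact Finset.sum_congr rfl fun x _ => by ring]
      ring

/-- The kernel of ·∧α : A¹ → A². -/
noncomputable def wedgeKer (d : W.C → ℕ) (α : W.C → ZMod p) :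
    Submodule (ZMod p) (W.C → ZMod p) :=
  LinearMap.ker (W.wedgeL d α)

/-- H¹ of the Combinatorial Aomoto complex with differential ·∧α. -/
noncomputable abbrev H1 (d : W.C → ℕ) (α : W.C → ZMod p) :=
  (W.wedgeKer d α) ⧸
    (Submodule.comap (W.wedgeKer d α).subtype (Submodule.span (ZMod p) {α}))

end WeakComb

namespace WeakComb

variable {p : ℕ} (W : WeakComb p)

/-- The resonance condition for (α,β) at the branch δ of the point P. -/
def ResCond (α β : W.C → ZMod p) (P : W.S) (δ : W.Δ P) : Prop :=
  β (W.φ P δ) * (∑ j : W.C, (W.muC P δ j : ZMod p) * α j)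
    - α (W.φ P δ) * (∑ j : W.C, (W.muC P δ j : ZMod p) * β j) = 0

/-- P is a p-transversal point for the pair of components i ≠ j. -/
def PTransPoint (P : W.S) (i j : W.C) : Prop :=
  i ≠ j ∧ (∀ δ : W.Δ P, W.φ P δ = i ∨ W.φ P δ = j) ∧
  (∃ δ : W.Δ P, W.φ P δ = i) ∧ (∃ δ : W.Δ P, W.φ P δ = j) ∧
  ((∃ δ : W.Δ P, W.φ P δ = i ∧ ((W.muC P δ j : ZMod p) ≠ 0)) ∨
   (∃ δ : W.Δ P, W.φ P δ = j ∧ ((W.muC P δ i : ZMod p) ≠ 0)))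

/-- The components i and j are p-transversal at a point. -/
def PTransComponents (i j : W.C) : Prop := ∃ P : W.S, W.PTransPoint P i j

/-- α is non-coordinate if all its coordinates are nonzero. -/
def NonCoordinate (α : W.C → ZMod p) : Prop := ∀ i, α i ≠ 0

end WeakComb

/-- The setoid (partition) obtained from s by merging the classes of c₀ and c₁. -/
def mergeSetoid {α : Type*} (s : Setoid α) (c₀ c₁ : α) : Setoid α :=
  Relation.EqvGen.setoid (fun a b => s.r a b ∨ (a = c₀ ∧ b = c₁))

namespace WeakComb

variable {p : ℕ} (W : WeakComb p)

/-- W is p-transversal at P with respect to (α, π), where the surjection π is encoded by the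
setoid s of its fibres; the two classes π(φ_P(Δ_P)) = {i',j'} are those of c₀ and c₁. -/
def PTransversalAt (α : W.C → ZMod p) (s : Setoid W.C) (P : W.S) (c₀ c₁ : W.C) : Prop :=
  ¬ s.r c₀ c₁ ∧
  (∀ δ : W.Δ P, s.r (W.φ P δ) c₀ ∨ s.r (W.φ P δ) c₁) ∧
  (∃ δ : W.Δ P, s.r (W.φ P δ) c₀) ∧ (∃ δ : W.Δ P, s.r (W.φ P δ) c₁) ∧
  ∃ δ : W.Δ P, s.r (W.φ P δ) c₀ ∧
    (∑ δ' : W.Δ P, if s.r (W.φ P δ') c₁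
        then (W.muk P δ δ' : ZMod p) * α (W.φ P δ') else 0) ≠ 0

/-- A p-reduction step with respect to α. -/
def RedStep (α : W.C → ZMod p) (s s' : Setoid W.C) : Prop :=
  ∃ (P : W.S) (c₀ c₁ : W.C), W.PTransversalAt α s P c₀ c₁ ∧ s' = mergeSetoid s c₀ c₁

/-- W is completely p-reductive with respect to α: starting from the identity partition (⊥),
some finite sequence of p-reduction steps reaches the one-class partition (⊤). -/
def CompletelyPReductive (α : W.C → ZMod p) : Prop :=
  Relation.ReflTransGen (W.RedStep α) ⊥ ⊤

/-- β is π-proportional to α, for the surjection π encoded by the setoid s: on each class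
of s, β is a scalar multiple of α. -/
def Proportional (s : Setoid W.C) (α β : W.C → ZMod p) : Prop :=
  ∀ c : W.C, ∃ l : ZMod p, ∀ c', s.r c c' → β c' = l * α c'

end WeakComb

/-- A combinatorial quasi-fiber structure of rank r on W. -/
structure QuasiFiber {p : ℕ} (W : WeakComb p) (r : ℕ) where
  /-- which quasi-fiber each component belongs to -/
  g : W.C → Fin r
  g_surj : Function.Surjective g
  /-- multiplicities of components inside the quasi-fibers -/
  m : W.C → ℕ
  m_pos : ∀ c, 0 < m c
  /-- the set of base points -/
  B : Set W.S
  fiber_off_base : ∀ P : W.S, P ∉ B → ∀ δ δ' : W.Δ P, g (W.φ P δ) = g (W.φ P δ')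

namespace WeakComb

variable {p : ℕ} (W : WeakComb p) {r : ℕ}

/-- M_s(δ) for a branch δ at a base point P. -/
noncomputable def Mcoef (F : QuasiFiber W r) (P : W.S) (δ : W.Δ P) (s : Fin r) : ZMod p :=
  ∑ δ' : W.Δ P,
    if W.φ P δ' ≠ W.φ P δ ∧ F.g (W.φ P δ') = s
      then ((F.m (W.φ P δ') * W.μ P δ δ' : ℕ) : ZMod p) else 0

/-- ω_a = Σ_c m_c · a_{g(c)} · σ_c ∈ A¹. -/
noncomputable def omega (F : QuasiFiber W r) (a : Fin r → ZMod p) : W.C → ZMod p :=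
  fun c => (F.m c : ZMod p) * a (F.g c)

/-- The restricted combinatorics W°_s of the quasi-fiber s. -/
noncomputable def restrict (F : QuasiFiber W r) (s : Fin r) : WeakComb p where
  C := {c : W.C // F.g c = s}
  fintypeC := Fintype.ofFinite _
  decEqC := inferInstance
  nonemptyC := by obtain ⟨c, hc⟩ := F.g_surj s; exact ⟨⟨c, hc⟩⟩
  S := {P : W.S // Nonempty (W.Δ P) ∧ ∀ δ : W.Δ P, F.g (W.φ P δ) = s}
  fintypeS := Fintype.ofFinite _
  decEqS := inferInstance
  Δ := fun P => W.Δ P.1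
  fintypeΔ := fun P => inferInstance
  decEqΔ := fun P => inferInstance
  φ := fun P δ => ⟨W.φ P.1 δ, P.2.2 δ⟩
  μ := fun P δ δ' => W.μ P.1 δ δ'
  μ_symm := fun P δ δ' h => W.μ_symm P.1 δ δ' (fun e => h (Subtype.ext e))
  μ_pos := fun P δ δ' h => W.μ_pos P.1 δ δ' (fun e => h (Subtype.ext e))

/-- The restriction ω_a|_s of ω_a to the restricted combinatorics W°_s. -/
noncomputable def omegaRes (F : QuasiFiber W r) (a : Fin r → ZMod p) (s : Fin r) :
    (W.restrict F s).C → ZMod p :=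
  fun c => (F.m c.1 : ZMod p) * a s

end WeakComb

namespace WeakComb

variable {p : ℕ} (W : WeakComb p)

/-! ### The local part of the wedge product -/

/-- The linear equation cut out by the branch `δ` at `P`: the contraction of the local part of
`η ∧ ω` against `δ` vanishes. This is `ResCond` with the sums over components unfolded into sums
over branches. -/
def BranchRes (η ω : W.C → ZMod p) (P : W.S) (δ : W.Δ P) : Prop :=
  η (W.φ P δ) * (∑ δ' : W.Δ P, (W.muk P δ δ' : ZMod p) * ω (W.φ P δ'))
    = ω (W.φ P δ) * ∑ δ' : W.Δ P, (W.muk P δ δ' : ZMod p) * η (W.φ P δ')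

lemma muk_comm (P : W.S) (δ δ' : W.Δ P) : W.muk P δ δ' = W.muk P δ' δ := by
  unfold muk
  by_cases h : W.φ P δ = W.φ P δ'
  · rw [if_pos h, if_pos h.symm]
  · rw [if_neg h, if_neg (fun e => h e.symm)]
    exact W.μ_symm P _ _ h

/-- The functional `ψ^a ∧ ψ^b ↦ [a = δ] - [b = δ]` on `Λ² A_P`: contraction with the sum of
coordinates, followed by the coordinate `δ`. It kills the triangle relations. -/
noncomputable def contract (P : W.S) (δ : W.Δ P) :
    (⋀[ZMod p]^2 (W.Δ P → ZMod p)) →ₗ[ZMod p] ZMod p :=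
  exteriorPower.alternatingMapLinearEquiv
    ((Matrix.detRowAlternating (n := Fin 2) (R := ZMod p)).compLinearMap
      (LinearMap.pi ![LinearMap.proj δ, ∑ x : W.Δ P, LinearMap.proj x]))

lemma contract_psiW (P : W.S) (δ a b : W.Δ P) :
    W.contract P δ (W.psiW P a b) = (if a = δ then 1 else 0) - (if b = δ then 1 else 0) := by
  have h : W.psiW P a b = exteriorPower.ιMulti (ZMod p) 2 ![W.psi P a, W.psi P b] := rfl
  rw [h, contract, exteriorPower.alternatingMapLinearEquiv_apply_ιMulti]
  simp only [AlternatingMap.compLinearMap_apply]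
  refine (Matrix.det_fin_two _).trans ?_
  simp [psi, Pi.single_apply, eq_comm]

lemma psiW_swap (P : W.S) (a b : W.Δ P) : W.psiW P a b = - W.psiW P b a := by
  have h (a b : W.Δ P) :
      W.psiW P a b = exteriorPower.ιMulti (ZMod p) 2 ![W.psi P a, W.psi P b] := rfl
  rw [h, h, ← AlternatingMap.map_swap _ _ (zero_ne_one (α := Fin 2))]
  congr 1
  funext i
  fin_cases i <;> simp

/-- The antisymmetrised row sums of the coefficients of `η ∧ ω`. -/
lemma rowSum_eq (η ω : W.C → ZMod p) (P : W.S) (δ : W.Δ P) :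
    (∑ δ' : W.Δ P, η (W.φ P δ) * ω (W.φ P δ') * (W.muk P δ δ' : ZMod p))
      - (∑ δ' : W.Δ P, η (W.φ P δ') * ω (W.φ P δ) * (W.muk P δ' δ : ZMod p))
    = η (W.φ P δ) * (∑ δ' : W.Δ P, (W.muk P δ δ' : ZMod p) * ω (W.φ P δ'))
      - ω (W.φ P δ) * ∑ δ' : W.Δ P, (W.muk P δ δ' : ZMod p) * η (W.φ P δ') := by
  rw [Finset.mul_sum, Finset.mul_sum]
  congr 1
  · exact Finset.sum_congr rfl fun _ _ => by ring
  · exact Finset.sum_congr rfl fun _ _ => by rw [W.muk_comm P _ δ]; ring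

/-- The local part of `η ∧ ω` at `P` vanishes in `Λ² A_P / I_P` exactly when all branch equations
at `P` hold: modulo `I_P` one has `ψ^a ∧ ψ^b = ψ^a ∧ ψ^o - ψ^b ∧ ψ^o` for any fixed branch `o`,
and the functionals `contract` separate these classes. -/
lemma wedge_fst_eq_zero_iff (d : W.C → ℕ) (η ω : W.C → ZMod p) (P : W.S) :
    (W.wedge d η ω).1 P = 0 ↔ ∀ δ, W.BranchRes η ω P δ := by
  constructor
  · intro h δ
    by_cases hs : ∀ a b : W.Δ P, W.φ P a = W.φ P b
    · -- a point on a single component carries no mixed intersection, so both sides are `0`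
      have h0 : ∀ b, W.muk P δ b = 0 := fun b => if_pos (hs δ b)
      simp [BranchRes, h0]
    · have hle : W.IP P ≤ LinearMap.ker (W.contract P δ) := by
        refine Submodule.span_le.2 ?_
        rintro x (⟨a, b, c, rfl⟩ | ⟨h1, -⟩)
        · simp only [SetLike.mem_coe, LinearMap.mem_ker, map_add, contract_psiW]
          ring
        · exact absurd h1 hs
      have h2 := congrArg ((W.IP P).liftQ (W.contract P δ) hle) h
      simp only [wedge, map_sum, map_smul, map_zero, Submodule.liftQ_apply, contract_psiW,
        smul_eq_mul, mul_sub, Finset.sum_sub_distrib, mul_ite, mul_one, mul_zero] at h2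
      rw [Finset.sum_comm] at h2
      simp only [Finset.sum_ite_eq', Finset.mem_univ, if_true] at h2
      rw [rowSum_eq] at h2
      exact sub_eq_zero.1 h2
  · intro h
    rcases isEmpty_or_nonempty (W.Δ P) with he | ⟨⟨o⟩⟩
    · simp [wedge]
    · have key : ∀ a b : W.Δ P, (Submodule.Quotient.mk (W.psiW P a b) : _ ⧸ W.IP P) =
          Submodule.Quotient.mk (W.psiW P a o) - Submodule.Quotient.mk (W.psiW P b o) := by
        intro a b
        rw [← Submodule.Quotient.mk_sub, Submodule.Quotient.eq]
        have : W.psiW P a b - (W.psiW P a o - W.psiW P b o)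
            = W.psiW P a b + W.psiW P b o + W.psiW P o a := by
          rw [W.psiW_swap P o a]; abel
        rw [this]
        exact Submodule.subset_span (Or.inl ⟨a, b, o, rfl⟩)
      simp only [wedge]
      rw [Finset.sum_congr rfl fun a _ => Finset.sum_congr rfl fun b _ => by
        rw [key a b, smul_sub]]
      simp only [Finset.sum_sub_distrib]
      rw [Finset.sum_comm (f := fun a b => (η (W.φ P a) * ω (W.φ P b) * (W.muk P a b : ZMod p)) •
        (Submodule.Quotient.mk (W.psiW P b o) : _ ⧸ W.IP P))]
      simp only [← Finset.sum_smul]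
      rw [← Finset.sum_sub_distrib]
      refine Finset.sum_eq_zero fun a _ => ?_
      rw [← sub_smul, rowSum_eq, sub_eq_zero.2 (h a), zero_smul]

/-! ### Reduction steps and proportionality -/

lemma merge_le {α : Type*} {s t : Setoid α} {c₀ c₁ : α} (h : s ≤ t) (hc : t c₀ c₁) :
    mergeSetoid s c₀ c₁ ≤ t := by
  refine Setoid.eqvGen_le ?_
  rintro a b (hab | ⟨rfl, rfl⟩)
  · exact h hab
  · exact hc

/-- If `ω` has no zero coordinate and `η` satisfies all branch equations against `ω`, then along
any sequence of `p`-reduction steps the ratio `η / ω` is constant on classes. At a transversal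
point with ratios `l₀`, `l₁` on the two classes, the equation of the distinguished branch reads
`ω_δ · (l₀ - l₁) · S = 0`, where `S ≠ 0` is the transversality sum. -/
lemma ratio_const [Fact p.Prime] (ω η : W.C → ZMod p) (hω : ∀ c, ω c ≠ 0)
    (hres : ∀ P δ, W.BranchRes η ω P δ) (s : Setoid W.C)
    (hs : Relation.ReflTransGen (W.RedStep ω) ⊥ s) :
    s ≤ Setoid.ker (fun c => η c / ω c) := by
  induction hs with
  | refl => exact bot_le
  | @tail s _ _ hstep ih =>
    obtain ⟨P, c₀, c₁, ⟨-, hcov, -, -, δ, hδ, hS⟩, rfl⟩ := hstep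
    refine merge_le ih ?_
    rw [Setoid.ker_def]
    have hη : ∀ {c c'}, s.r c c' → η c = η c' / ω c' * ω c := by
      intro c c' h
      have h1 : η c / ω c = η c' / ω c' := ih h
      rw [← h1, div_mul_cancel₀ _ (hω c)]
    have hr := hres P δ
    set l₀ := η c₀ / ω c₀
    set l₁ := η c₁ / ω c₁
    -- `η = l₀ ω` off the class of `c₁` at `P`, and `η = l₁ ω` on it
    have hsum : ∑ δ' : W.Δ P, (W.muk P δ δ' : ZMod p) * η (W.φ P δ')
        = l₀ * (∑ δ' : W.Δ P, (W.muk P δ δ' : ZMod p) * ω (W.φ P δ'))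
          + (l₁ - l₀) * ∑ δ' : W.Δ P, if s.r (W.φ P δ') c₁
            then (W.muk P δ δ' : ZMod p) * ω (W.φ P δ') else 0 := by
      rw [Finset.mul_sum, Finset.mul_sum, ← Finset.sum_add_distrib]
      refine Finset.sum_congr rfl fun δ' _ => ?_
      split_ifs with h1
      · rw [hη h1]; ring
      · rw [hη ((hcov δ').resolve_right h1)]; ring
    unfold BranchRes at hr
    rw [hsum, hη hδ] at hr
    have h0 : ω (W.φ P δ) * ((l₁ - l₀) * ∑ δ' : W.Δ P, if s.r (W.φ P δ') c₁
            then (W.muk P δ δ' : ZMod p) * ω (W.φ P δ') else 0) = 0 := by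
      linear_combination -hr
    have h1 := (mul_eq_zero.1 ((mul_eq_zero.1 h0).resolve_left (hω _))).resolve_right hS
    exact (sub_eq_zero.1 h1).symm

variable {r : ℕ}

lemma restrict_muk (F : QuasiFiber W r) (s : Fin r) (P : (W.restrict F s).S)
    (δ δ' : (W.restrict F s).Δ P) : (W.restrict F s).muk P δ δ' = W.muk P.1 δ δ' := by
  by_cases h : W.φ P.1 δ = W.φ P.1 δ'
  · exact (if_pos (Subtype.ext h)).trans (if_pos h).symm
  · exact (if_neg fun e => h (congrArg Subtype.val e)).trans (if_neg h).symm

/-- Branch equations at a point of `W°_s` involve only components of the quasi-fiber `s`. -/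
lemma restrict_branchRes (F : QuasiFiber W r) (s : Fin r) (η ω : W.C → ZMod p)
    (P : (W.restrict F s).S) (δ : (W.restrict F s).Δ P) (h : W.BranchRes η ω P.1 δ) :
    (W.restrict F s).BranchRes (fun c => η c.1) (fun c => ω c.1) P δ := by
  have e : ∀ f : W.C → ZMod p,
      (∑ δ' : (W.restrict F s).Δ P, ((W.restrict F s).muk P δ δ' : ZMod p)
          * f ((W.restrict F s).φ P δ').1)
        = ∑ δ' : W.Δ P.1, (W.muk P.1 δ δ' : ZMod p) * f (W.φ P.1 δ') :=
    fun f => Finset.sum_congr rfl fun δ' _ => by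
      rw [W.restrict_muk F s P δ δ']
      rfl
  unfold BranchRes
  rw [e, e]
  exact h

/-! ### The space of forms constant along quasi-fibers -/

/-- `Σ_δ' μ(δ,δ') ω_b(δ') = Σ_s b_s M_s(δ)`. -/
lemma sum_muk_omega (F : QuasiFiber W r) (b : Fin r → ZMod p) (P : W.S) (δ : W.Δ P) :
    ∑ δ' : W.Δ P, (W.muk P δ δ' : ZMod p) * W.omega F b (W.φ P δ')
      = ∑ s, b s * W.Mcoef F P δ s := by
  simp only [Mcoef, Finset.mul_sum]
  rw [Finset.sum_comm]
  refine Finset.sum_congr rfl fun δ' _ => ?_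
  rw [Finset.sum_eq_single (F.g (W.φ P δ'))]
  · unfold muk omega
    by_cases h : W.φ P δ = W.φ P δ'
    · simp [h]
    · rw [if_neg h, if_pos ⟨fun e => h e.symm, rfl⟩]
      push_cast
      ring
  · intro s _ hs
    rw [if_neg (fun h => hs h.2.symm), mul_zero]
  · simp

/-- Every `ω_b` satisfies the branch equations against `ω_𝟙`: at a base point only the term
`M_{g(δ)}(δ)` survives, and elsewhere `ω_b` is a scalar multiple of `ω_𝟙`. -/
lemma omega_branchRes (F : QuasiFiber W r)
    (hM : ∀ P ∈ F.B, ∀ δ : W.Δ P, ∀ s : Fin r,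
      s ≠ F.g (W.φ P δ) → W.Mcoef F P δ s = 0)
    (b : Fin r → ZMod p) (P : W.S) (δ : W.Δ P) :
    W.BranchRes (W.omega F b) (W.omega F fun _ => 1) P δ := by
  unfold BranchRes
  by_cases hP : P ∈ F.B
  · have e (c : Fin r → ZMod p) : ∑ s, c s * W.Mcoef F P δ s
        = c (F.g (W.φ P δ)) * W.Mcoef F P δ (F.g (W.φ P δ)) := by
      refine Finset.sum_eq_single _ (fun s _ hs => ?_) (by simp)
      rw [hM P hP δ s hs, mul_zero]
    rw [sum_muk_omega, sum_muk_omega, e, e]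
    simp only [omega]
    ring
  · rw [Finset.mul_sum, Finset.mul_sum]
    refine Finset.sum_congr rfl fun δ' _ => ?_
    simp only [omega, F.fiber_off_base P hP δ δ']
    ring

lemma sum_degree_omega (F : QuasiFiber W r) (d : W.C → ℕ)
    (hD : ∀ s : Fin r,
      ((∑ c : W.C, if F.g c = s then d c * F.m c else 0 : ℕ) : ZMod p) = 0)
    (b : Fin r → ZMod p) : ∑ c : W.C, (d c : ZMod p) * W.omega F b c = 0 := by
  have h : ∑ c : W.C, (d c : ZMod p) * W.omega F b c
      = ∑ s, b s * ((∑ c : W.C, if F.g c = s then d c * F.m c else 0 : ℕ) : ZMod p) := by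
    simp only [Nat.cast_sum, Finset.mul_sum]
    rw [Finset.sum_comm]
    refine Finset.sum_congr rfl fun c _ => ?_
    rw [Finset.sum_eq_single (F.g c)]
    · rw [if_pos rfl, omega]
      push_cast
      ring
    · intro s _ hs
      rw [if_neg hs.symm, Nat.cast_zero, mul_zero]
    · simp
  rw [h]
  exact Finset.sum_eq_zero fun s _ => by rw [hD s, mul_zero]

/-- The parametrisation `b ↦ ω_b` of `R_φ`. -/
noncomputable def omegaL (F : QuasiFiber W r) : (Fin r → ZMod p) →ₗ[ZMod p] (W.C → ZMod p) where
  toFun b := W.omega F b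
  map_add' a b := by
    funext c
    simp [omega, mul_add]
  map_smul' t b := by
    funext c
    simp only [omega, Pi.smul_apply, smul_eq_mul, RingHom.id_apply]
    ring

lemma omegaL_injective [Fact p.Prime] (F : QuasiFiber W r) (hm : ∀ c : W.C, ¬ p ∣ F.m c) :
    Function.Injective (W.omegaL F) := by
  intro a b h
  funext s
  obtain ⟨c, rfl⟩ := F.g_surj s
  have h1 : (F.m c : ZMod p) * a (F.g c) = (F.m c : ZMod p) * b (F.g c) := congrFun h c
  exact mul_left_cancel₀ (fun e => hm c ((ZMod.natCast_eq_zero_iff _ _).1 e)) h1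

end WeakComb

section Statements

open WeakComb

variable {p : ℕ} [Fact p.Prime]

/-- Theorem `p.index`, `moreover` part: index p. -/
theorem stmt14 (W : WeakComb p) (d : W.C → ℕ) (hd : W.IsDegree d)
    {r : ℕ} (F : QuasiFiber W r)
    (hm : ∀ c : W.C, ¬ p ∣ F.m c)
    (hM : ∀ P ∈ F.B, ∀ δ : W.Δ P, ∀ s : Fin r,
      s ≠ F.g (W.φ P δ) → W.Mcoef F P δ s = 0)
    (hD : ∀ s : Fin r,
      ((∑ c : W.C, if F.g c = s then d c * F.m c else 0 : ℕ) : ZMod p) = 0)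
    (hred : ∀ s : Fin r,
      (W.restrict F s).CompletelyPReductive
        (W.omegaRes F (fun _ => 1) s)) :
    (∀ η : W.C → ZMod p,
      W.wedge d η (W.omega F fun _ => 1) = 0 ↔
        ∃ b : Fin r → ZMod p, η = W.omega F b) ∧
    Module.finrank (ZMod p) (W.H1 d (W.omega F fun _ => 1)) = r - 1 := by
  have hω : ∀ c, W.omega F (fun _ => 1) c ≠ 0 := by
    intro c
    simpa [omega] using fun e => hm c ((ZMod.natCast_eq_zero_iff _ _).1 e)
  have hker : ∀ η : W.C → ZMod p, W.wedge d η (W.omega F fun _ => 1) = 0 ↔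
        ∃ b : Fin r → ZMod p, η = W.omega F b := by
    intro η
    constructor
    · intro h
      have hres : ∀ P δ, W.BranchRes η (W.omega F fun _ => 1) P δ := fun P =>
        (W.wedge_fst_eq_zero_iff d _ _ P).1 (congrFun (congrArg Prod.fst h) P)
      have hratio : ∀ c c', F.g c = F.g c' →
          η c / W.omega F (fun _ => 1) c = η c' / W.omega F (fun _ => 1) c' := by
        intro c c' hcc
        have := (W.restrict F (F.g c')).ratio_const (W.omegaRes F (fun _ => 1) (F.g c'))
          (fun x => η x.1) (fun x => hω x.1)
          (fun P δ => W.restrict_branchRes F _ η (W.omega F fun _ => 1) P δ (hres P.1 δ))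
          ⊤ (hred (F.g c'))
        exact this (x := ⟨c, hcc⟩) (y := ⟨c', rfl⟩) trivial
      refine ⟨fun s => η (F.g_surj s).choose /
        W.omega F (fun _ => 1) (F.g_surj s).choose, ?_⟩
      funext c
      have h1 := hratio _ c (F.g_surj (F.g c)).choose_spec
      have h2 := hω c
      simp only [omega] at h1 h2 ⊢
      rw [h1, mul_one, mul_div_cancel₀ _ (by simpa using h2)]
    · rintro ⟨b, rfl⟩
      refine Prod.ext (funext fun P => ?_) (funext fun i => ?_)
      · exact (W.wedge_fst_eq_zero_iff d _ _ P).2 (W.omega_branchRes F hM b P)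
      · simp [wedge, W.sum_degree_omega F d hD]
  refine ⟨hker, ?_⟩
  have hK : W.wedgeKer d (W.omega F fun _ => 1) = LinearMap.range (W.omegaL F) := by
    ext η
    refine (hker η).trans ?_
    simp only [LinearMap.mem_range, omegaL, LinearMap.coe_mk, AddHom.coe_mk, eq_comm]
  have hle : Submodule.span (ZMod p) {W.omega F fun _ => 1} ≤
      W.wedgeKer d (W.omega F fun _ => 1) := by
    rw [hK, Submodule.span_singleton_le_iff_mem]
    exact ⟨fun _ => 1, rfl⟩
  have hKr : Module.finrank (ZMod p) (W.wedgeKer d (W.omega F fun _ => 1)) = r := by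
    rw [hK, LinearMap.finrank_range_of_inj (W.omegaL_injective F hm)]
    simp
  have hsp : Module.finrank (ZMod p) (Submodule.comap
      (W.wedgeKer d (W.omega F fun _ => 1)).subtype
      (Submodule.span (ZMod p) {W.omega F fun _ => 1})) = 1 := by
    rw [(Submodule.comapSubtypeEquivOfLe hle).finrank_eq]
    refine finrank_span_singleton fun h => ?_
    exact hω (Classical.arbitrary W.C) (congrFun h _)
  rw [Submodule.finrank_quotient, hKr, hsp]

end Statements
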